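/- Let (G,C) be a strongly connected inhomogeneous Mauldin–Williams graph in ℝ^d satisfying the SOSC, with the sets X_i having pairwise disjoint interiors and with ∫₀^∞ e^{−s₀(G)t} N_{e^{−t}}(C_i) dt < ∞ for all i ∈ V, and set K^C = ⋃_{i∈V} K_i^C and s₀ = s₀(G). If (t_n)_{n∈ℕ} is a sequence of positive reals tending to ∞ such that lim_{n→∞} e^{−s₀t_n} N_{e^{−t_n}}(K_i^C) exists for every i ∈ V, then lim_{n→∞} e^{−s₀t_n} N_{e^{−t_n}}(K^C) exists and equals Σ_{i∈V} lim_{n→∞} e^{−s₀t_n} N_{e^{−t_n}}(K_i^C). -/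

import Mathlib

open Set Filter Topology MeasureTheory Metric

noncomputable section

/-- Points of `ℝ^d`. -/
abbrev Pt (d : ℕ) := EuclideanSpace ℝ (Fin d)

/-- The `r`-covering number of `A ⊆ ℝ^d`: the least number of closed balls of
radius `r` needed to cover `A`. -/
noncomputable def coveringNumber {d : ℕ} (A : Set (Pt d)) (r : ℝ) : ℕ :=
  sInf {k : ℕ | ∃ c : Fin k → Pt d, A ⊆ ⋃ i, Metric.closedBall (c i) r}

/-- A Mauldin–Williams graph in `ℝ^d` over a finite directed multigraph with
vertex type `V` and edge type `E`: each vertex `i` carries a non-empty compact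
set `X i` equal to the closure of its interior, and each edge `e` carries a
contractive similarity `S e` of ratio `r e ∈ (0,1)` mapping `X (term e)` into
`X (init e)`. -/
structure MWGraph (d : ℕ) (V E : Type) [Fintype V] [Fintype E] where
  init : E → V
  term : E → V
  X : V → Set (Pt d)
  S : E → Pt d → Pt d
  r : E → ℝ
  X_nonempty : ∀ i, (X i).Nonempty
  X_compact : ∀ i, IsCompact (X i)
  X_regular : ∀ i, closure (interior (X i)) = X i
  r_pos : ∀ e, 0 < r e
  r_lt_one : ∀ e, r e < 1
  S_maps : ∀ e, Set.MapsTo (S e) (X (term e)) (X (init e))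
  S_sim : ∀ e x y, dist (S e x) (S e y) = r e * dist x y

namespace MWGraph

variable {d : ℕ} {V E : Type} [Fintype V] [Fintype E]

variable (G : MWGraph d V E)

/-- `G.IsPathFrom j γ` holds iff the list of edges `γ` is a directed path
starting at vertex `j`. -/
def IsPathFrom : V → List E → Prop
  | _, [] => True
  | j, e :: es => G.init e = j ∧ IsPathFrom (G.term e) es

/-- Terminal vertex of the path `γ` starting at `j`. -/
def pathTerm : V → List E → V
  | j, [] => j
  | _, e :: es => pathTerm (G.term e) es

/-- `S_γ = S_{e₁} ∘ ⋯ ∘ S_{eₙ}` (with `S_∅ = id`). -/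
def pathMap : List E → Pt d → Pt d
  | [] => id
  | e :: es => G.S e ∘ pathMap es

/-- `r_γ = r_{e₁} ⋯ r_{eₙ}` (with `r_∅ = 1`). -/
def pathRatio (γ : List E) : ℝ := (γ.map G.r).prod

/-- The underlying multigraph is strongly connected: for every ordered pair of
vertices there is a (non-empty) directed path from the first to the second. -/
def StronglyConnected : Prop :=
  ∀ i j : V, ∃ γ : List E, γ ≠ [] ∧ G.IsPathFrom i γ ∧ G.pathTerm i γ = j

/-- `K` is the list of graph-directed self-similar sets of `G`: the unique list
of non-empty compact sets with `K i = ⋃_{e ∈ E_i} S_e (K (term e))`. -/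
def IsAttractor (K : V → Set (Pt d)) : Prop :=
  (∀ i, IsCompact (K i)) ∧ (∀ i, (K i).Nonempty) ∧
    ∀ i, K i = ⋃ e ∈ {e : E | G.init e = i}, G.S e '' K (G.term e)

/-- `C` is an admissible list of condensation sets: compact subsets of the `X i`. -/
def IsCondensation (C : V → Set (Pt d)) : Prop :=
  ∀ i, IsCompact (C i) ∧ C i ⊆ G.X i

/-- `K` is the list of inhomogeneous graph-directed self-similar sets of `(G, C)`:
the unique list of non-empty compact sets with
`K i = ⋃_{e ∈ E_i} S_e (K (term e)) ∪ C i`. -/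
def IsInhomAttractor (C : V → Set (Pt d)) (K : V → Set (Pt d)) : Prop :=
  (∀ i, IsCompact (K i)) ∧ (∀ i, (K i).Nonempty) ∧
    ∀ i, K i = (⋃ e ∈ {e : E | G.init e = i}, G.S e '' K (G.term e)) ∪ C i

/-- `G` satisfies the open set condition with the open sets `U`. -/
def IsOSCWith (U : V → Set (Pt d)) : Prop :=
  (∀ i, (U i).Nonempty) ∧ (∀ i, IsOpen (U i)) ∧ (∀ i, Bornology.IsBounded (U i)) ∧
    (∀ i, U i ⊆ G.X i) ∧
    (∀ i, (⋃ e ∈ {e : E | G.init e = i}, G.S e '' U (G.term e)) ⊆ U i) ∧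
    ∀ e e' : E, G.init e = G.init e' → e ≠ e' →
      Disjoint (G.S e '' U (G.term e)) (G.S e' '' U (G.term e'))

/-- The set `{-log r_γ : γ a directed cycle of G}`. -/
def cycleSet : Set ℝ :=
  {x : ℝ | ∃ (j : V) (γ : List E), γ ≠ [] ∧ G.IsPathFrom j γ ∧ G.pathTerm j γ = j ∧
    x = -Real.log (G.pathRatio γ)}

/-- `G_M`, the smallest closed additive subgroup of `ℝ` containing
`{-log r_γ : γ a directed cycle}`. -/
def GM : Set ℝ := closure ((AddSubgroup.closure (G.cycleSet) : AddSubgroup ℝ) : Set ℝ)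

variable [DecidableEq V]

/-- The matrix `A_G^s` with entries `(A_G^s)_{ij} = Σ_{e ∈ E_{ij}} r_e^s`. -/
def Amatrix (s : ℝ) : Matrix V V ℝ :=
  Matrix.of fun i j => ∑ e : E, if G.init e = i ∧ G.term e = j then G.r e ^ s else 0

end MWGraph

/-- Spectral radius of a real square matrix: the largest modulus of a complex
eigenvalue. -/
noncomputable def matrixSpectralRadius {n : Type} [Fintype n] [DecidableEq n]
    (A : Matrix n n ℝ) : ℝ :=
  sSup {x : ℝ | ∃ μ : ℂ, μ ∈ spectrum ℂ (A.map (fun a : ℝ => (a : ℂ))) ∧ x = ‖μ‖}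

/-- `s` is the (unique) exponent `s ≥ 0` with `ρ(A_G^s) = 1`, i.e. `s = s₀(G)`. -/
def IsS0 {d : ℕ} {V E : Type} [Fintype V] [Fintype E] [DecidableEq V]
    (G : MWGraph d V E) (s : ℝ) : Prop :=
  0 ≤ s ∧ matrixSpectralRadius (G.Amatrix s) = 1


section CoveringNumber

variable {d : ℕ}

lemma coveringNumber_le_card {ι : Type*} [Fintype ι] {A : Set (Pt d)} {r : ℝ} (c : ι → Pt d)
    (h : A ⊆ ⋃ i, closedBall (c i) r) : coveringNumber A r ≤ Fintype.card ι := by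
  refine Nat.sInf_le ⟨c ∘ (Fintype.equivFin ι).symm, h.trans ?_⟩
  intro x hx
  obtain ⟨i, hi⟩ := mem_iUnion.1 hx
  exact mem_iUnion.2 ⟨Fintype.equivFin ι i, by simpa using hi⟩

lemma exists_cover_of_isBounded {A : Set (Pt d)} (hA : Bornology.IsBounded A) {r : ℝ}
    (hr : 0 < r) :
    ∃ c : Fin (coveringNumber A r) → Pt d, A ⊆ ⋃ i, closedBall (c i) r := by
  have hne : {k : ℕ | ∃ c : Fin k → Pt d, A ⊆ ⋃ i, closedBall (c i) r}.Nonempty := by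
    obtain ⟨F, hF, hcov⟩ := Metric.totallyBounded_iff.1
      (hA.isCompact_closure.totallyBounded.subset subset_closure) r hr
    have := hF.fintype
    refine ⟨Fintype.card F, fun k => ((Fintype.equivFin F).symm k : Pt d), fun x hx => ?_⟩
    obtain ⟨y, hy, hxy⟩ := mem_iUnion₂.1 (hcov hx)
    exact mem_iUnion.2 ⟨Fintype.equivFin F ⟨y, hy⟩, by simpa using ball_subset_closedBall hxy⟩
  exact Nat.sInf_mem hne

lemma coveringNumber_mono {A B : Set (Pt d)} (hB : Bornology.IsBounded B) (hAB : A ⊆ B) {r : ℝ}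
    (hr : 0 < r) : coveringNumber A r ≤ coveringNumber B r := by
  obtain ⟨c, hc⟩ := exists_cover_of_isBounded hB hr
  simpa using coveringNumber_le_card c (hAB.trans hc)

lemma coveringNumber_anti {A : Set (Pt d)} (hA : Bornology.IsBounded A) {r r' : ℝ}
    (hr : 0 < r) (hrr : r ≤ r') : coveringNumber A r' ≤ coveringNumber A r := by
  obtain ⟨c, hc⟩ := exists_cover_of_isBounded hA hr
  simpa using coveringNumber_le_card c
    (hc.trans (iUnion_mono fun i => closedBall_subset_closedBall hrr))

lemma coveringNumber_iUnion_le {ι : Type*} [Fintype ι] {A : ι → Set (Pt d)}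
    (hA : ∀ i, Bornology.IsBounded (A i)) {r : ℝ} (hr : 0 < r) :
    coveringNumber (⋃ i, A i) r ≤ ∑ i, coveringNumber (A i) r := by
  choose c hc using fun i => exists_cover_of_isBounded (hA i) hr
  have := coveringNumber_le_card (A := ⋃ i, A i) (r := r)
    (fun p : Σ i, Fin (coveringNumber (A i) r) => c p.1 p.2) (fun x hx => by
      obtain ⟨i, hi⟩ := mem_iUnion.1 hx
      obtain ⟨k, hk⟩ := mem_iUnion.1 (hc i hi)
      exact mem_iUnion.2 ⟨⟨i, k⟩, hk⟩)
  simpa using this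

lemma coveringNumber_union_le {A B : Set (Pt d)} (hA : Bornology.IsBounded A)
    (hB : Bornology.IsBounded B) {r : ℝ} (hr : 0 < r) :
    coveringNumber (A ∪ B) r ≤ coveringNumber A r + coveringNumber B r := by
  obtain ⟨a, ha⟩ := exists_cover_of_isBounded hA hr
  obtain ⟨b, hb⟩ := exists_cover_of_isBounded hB hr
  have := coveringNumber_le_card (A := A ∪ B) (r := r) (Sum.elim a b) (fun x hx => by
    rcases hx with hx | hx
    · obtain ⟨k, hk⟩ := mem_iUnion.1 (ha hx)
      exact mem_iUnion.2 ⟨Sum.inl k, hk⟩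
    · obtain ⟨k, hk⟩ := mem_iUnion.1 (hb hx)
      exact mem_iUnion.2 ⟨Sum.inr k, hk⟩)
  simpa using this

lemma coveringNumber_image_le {A : Set (Pt d)} (hA : Bornology.IsBounded A) {S : Pt d → Pt d}
    {ρ : ℝ} (hρ : 0 < ρ) (hS : ∀ x y, dist (S x) (S y) = ρ * dist x y) {r : ℝ} (hr : 0 < r) :
    coveringNumber (S '' A) r ≤ coveringNumber A (r / ρ) := by
  obtain ⟨c, hc⟩ := exists_cover_of_isBounded hA (div_pos hr hρ)
  have := coveringNumber_le_card (A := S '' A) (r := r) (S ∘ c) (by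
    rintro _ ⟨x, hx, rfl⟩
    obtain ⟨k, hk⟩ := mem_iUnion.1 (hc hx)
    refine mem_iUnion.2 ⟨k, ?_⟩
    rw [mem_closedBall] at hk ⊢
    rw [Function.comp_apply, hS, mul_comm]
    exact (le_div_iff₀ hρ).1 hk)
  simpa using this

end CoveringNumber

section Similarity

variable {d : ℕ}

lemma similarity_surjective {S : Pt d → Pt d} {ρ : ℝ} (hρ : 0 < ρ)
    (hS : ∀ x y, dist (S x) (S y) = ρ * dist x y) : Function.Surjective S := by
  have hiso : Isometry fun x => ρ⁻¹ • S x := by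
    refine Isometry.of_dist_eq fun x y => ?_
    rw [dist_smul₀, hS, Real.norm_of_nonneg (inv_nonneg.2 hρ.le), inv_mul_cancel_left₀ hρ.ne']
  have hsurj : Function.Surjective (hiso.affineIsometryOfStrictConvexSpace) :=
    hiso.affineIsometryOfStrictConvexSpace.toAffineIsometryEquiv rfl |>.surjective
  intro y
  obtain ⟨x, hx⟩ := hsurj (ρ⁻¹ • y)
  exact ⟨x, smul_right_injective _ (inv_ne_zero hρ.ne') hx⟩

lemma closedBall_subset_of_similarity {S : Pt d → Pt d} {ρ : ℝ} (hρ : 0 < ρ)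
    (hS : ∀ x y, dist (S x) (S y) = ρ * dist x y) {U W : Set (Pt d)} (hUW : MapsTo S U W)
    {y : Pt d} {R : ℝ} (hy : closedBall y (R / ρ) ⊆ U) : closedBall (S y) R ⊆ W := by
  intro z hz
  obtain ⟨x, rfl⟩ := similarity_surjective hρ hS z
  refine hUW (hy ?_)
  rw [mem_closedBall, hS] at hz
  rw [mem_closedBall, le_div_iff₀ hρ, mul_comm]
  exact hz

lemma isBounded_image_of_similarity {S : Pt d → Pt d} {ρ : ℝ} (hρ : 0 < ρ)
    (hS : ∀ x y, dist (S x) (S y) = ρ * dist x y) {A : Set (Pt d)} (hA : Bornology.IsBounded A) :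
    Bornology.IsBounded (S '' A) := by
  have : LipschitzWith ⟨ρ, hρ.le⟩ S := LipschitzWith.of_dist_le_mul fun x y => (hS x y).le
  exact this.isBounded_image hA

end Similarity

section PerronFrobenius

variable {V : Type} [Fintype V] [DecidableEq V]

attribute [local instance] Matrix.linftyOpNormedRing Matrix.linftyOpNormedAlgebra

lemma norm_le_matrixSpectralRadius (A : Matrix V V ℝ) {μ : ℂ}
    (hμ : μ ∈ spectrum ℂ (A.map (fun a : ℝ => (a : ℂ)))) : ‖μ‖ ≤ matrixSpectralRadius A := by
  refine le_csSup ?_ ⟨μ, hμ, rfl⟩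
  refine ⟨‖A.map (fun a : ℝ => (a : ℂ))‖ * ‖(1 : Matrix V V ℂ)‖, ?_⟩
  rintro _ ⟨ν, hν, rfl⟩
  exact spectrum.norm_le_norm_mul_of_mem hν

lemma exists_pow_mulVec_one_le (A : Matrix V V ℝ) (hρ : matrixSpectralRadius A ≤ 1) {q : ℝ}
    (hq : 1 < q) : ∃ N : ℕ, 0 < N ∧ ∀ i, ((A ^ N).mulVec 1) i ≤ q ^ N := by
  set B := A.map (fun a : ℝ => (a : ℂ)) with hB
  have hB' : B = (algebraMap ℝ ℂ).mapMatrix A := rfl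
  have hr : spectralRadius ℂ B ≤ 1 := by
    refine iSup₂_le fun μ hμ => ?_
    have : ‖μ‖₊ ≤ 1 := (norm_le_matrixSpectralRadius A hμ).trans hρ
    exact_mod_cast this
  have hlt : spectralRadius ℂ B < ENNReal.ofReal q :=
    hr.trans_lt (by simpa using hq)
  have hev := (spectrum.pow_nnnorm_pow_one_div_tendsto_nhds_spectralRadius B).eventually_lt_const hlt
  obtain ⟨N, hN, hNpos⟩ := (hev.and (eventually_gt_atTop 0)).exists
  refine ⟨N, hNpos, fun i => ?_⟩
  have hnorm : ‖B ^ N‖ ≤ q ^ N := by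
    have h1 : ((‖B ^ N‖₊ : ENNReal) ^ (1 / N : ℝ)) ^ (N : ℝ) ≤ (ENNReal.ofReal q) ^ (N : ℝ) :=
      ENNReal.rpow_le_rpow hN.le (by positivity)
    have hN0 : (N : ℝ) ≠ 0 := by positivity
    rw [← ENNReal.rpow_mul, one_div_mul_cancel hN0, ENNReal.rpow_one, ENNReal.rpow_natCast,
      ← ENNReal.ofReal_pow (by linarith)] at h1
    have h2 := ENNReal.toReal_mono ENNReal.ofReal_ne_top h1
    rwa [ENNReal.toReal_ofReal (by positivity)] at h2
  have hone : (B ^ N).mulVec 1 i = (((A ^ N).mulVec 1 i : ℝ) : ℂ) := by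
    rw [hB', ← map_pow]
    simp [Matrix.mulVec, dotProduct]
  calc (A ^ N).mulVec 1 i ≤ ‖(B ^ N).mulVec 1 i‖ := by
        rw [hone, Complex.norm_real]; exact le_abs_self _
    _ ≤ ‖(B ^ N).mulVec 1‖ := norm_le_pi_norm _ i
    _ ≤ ‖B ^ N‖ * ‖(1 : V → ℂ)‖ := Matrix.linfty_opNorm_mulVec _ _
    _ ≤ ‖B ^ N‖ * 1 := by
        gcongr
        exact (pi_norm_le_iff_of_nonneg zero_le_one).2 fun _ => by simp
    _ ≤ q ^ N := by simpa using hnorm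

lemma exists_approx_superharmonic (A : Matrix V V ℝ) (hA : ∀ i j, 0 ≤ A i j)
    (hρ : matrixSpectralRadius A ≤ 1) [Nonempty V] {q : ℝ} (hq : 1 < q) :
    ∃ h : V → ℝ, (∀ i, 0 ≤ h i) ∧ ‖h‖ = 1 ∧ ∀ i, A.mulVec h i ≤ q * h i := by
  obtain ⟨N, hN, hpow⟩ := exists_pow_mulVec_one_le A hρ hq
  have hq0 : 0 < q := by linarith
  set B := q⁻¹ • A with hB
  have hAB : A = q • B := by rw [hB, smul_smul, mul_inv_cancel₀ hq0.ne', one_smul]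
  have hBnn : ∀ n i j, 0 ≤ (B ^ n) i j := by
    intro n
    induction n with
    | zero => intro i j; rw [pow_zero, Matrix.one_apply]; split_ifs <;> simp
    | succ n ih =>
      intro i j
      rw [pow_succ, Matrix.mul_apply]
      exact Finset.sum_nonneg fun k _ => mul_nonneg (ih i k)
        (mul_nonneg (inv_nonneg.2 hq0.le) (hA k j))
  have hB1nn : ∀ n i, 0 ≤ (B ^ n).mulVec 1 i := fun n i =>
    Finset.sum_nonneg fun k _ => mul_nonneg (hBnn n i k) (by simp)
  set g : V → ℝ := (∑ n ∈ Finset.range N, B ^ n).mulVec 1 with hg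
  have hgi : ∀ i, g i = ∑ n ∈ Finset.range N, (B ^ n).mulVec 1 i := by
    intro i; rw [hg, Matrix.sum_mulVec, Finset.sum_apply]
  have hg1 : ∀ i, 1 ≤ g i := by
    intro i
    rw [hgi]
    refine le_trans ?_ (Finset.single_le_sum (fun n _ => hB1nn n i) (Finset.mem_range.2 hN))
    simp
  have hBg : ∀ i, B.mulVec g i ≤ g i := by
    intro i
    have e1 : B * ∑ n ∈ Finset.range N, B ^ n = (∑ n ∈ Finset.range N, B ^ n) + B ^ N - 1 := by
      have := Finset.sum_range_succ (fun n => B ^ n) N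
      rw [← this, Finset.sum_range_succ', pow_zero, add_sub_cancel_right, Finset.mul_sum]
      simp_rw [pow_succ']
    have e2 : (B ^ N).mulVec 1 i ≤ 1 := by
      rw [hB, smul_pow, Matrix.smul_mulVec, Pi.smul_apply, smul_eq_mul, inv_pow,
        inv_mul_le_iff₀ (by positivity), mul_one]
      exact hpow i
    rw [hg, Matrix.mulVec_mulVec, e1, Matrix.sub_mulVec, Matrix.add_mulVec, Pi.sub_apply,
      Pi.add_apply, Matrix.one_mulVec, Pi.one_apply]
    linarith
  have hgne : 0 < ‖g‖ := by
    obtain ⟨i⟩ := ‹Nonempty V›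
    exact lt_of_lt_of_le (by linarith [hg1 i]) ((le_abs_self (g i)).trans (norm_le_pi_norm g i))
  refine ⟨‖g‖⁻¹ • g, fun i => ?_, ?_, fun i => ?_⟩
  · exact mul_nonneg (by positivity) (by linarith [hg1 i])
  · rw [norm_smul, norm_inv, norm_norm, inv_mul_cancel₀ hgne.ne']
  · rw [Matrix.mulVec_smul, Pi.smul_apply, Pi.smul_apply, smul_eq_mul, smul_eq_mul,
      mul_left_comm q, hAB, Matrix.smul_mulVec, Pi.smul_apply, smul_eq_mul]
    have := hBg i
    gcongr

lemma exists_superharmonic (A : Matrix V V ℝ) (hA : ∀ i j, 0 ≤ A i j)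
    (hρ : matrixSpectralRadius A ≤ 1) [Nonempty V] :
    ∃ h : V → ℝ, (∀ i, 0 ≤ h i) ∧ h ≠ 0 ∧ ∀ i, A.mulVec h i ≤ h i := by
  have hq : ∀ n : ℕ, 1 < 1 + 1 / ((n : ℝ) + 1) := fun n => lt_add_of_pos_right _ (by positivity)
  choose g hg0 hg1 hgA using fun n : ℕ => exists_approx_superharmonic A hA hρ (hq n)
  obtain ⟨h, hh, φ, hφ, hlim⟩ := (isCompact_sphere (0 : V → ℝ) 1).tendsto_subseq
    (x := g) (fun n => by simpa using hg1 n)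
  have hlimi : ∀ i, Tendsto (fun n => g (φ n) i) atTop (𝓝 (h i)) := fun i =>
    (continuous_apply i).tendsto _ |>.comp hlim
  refine ⟨h, fun i => ge_of_tendsto' (hlimi i) fun n => hg0 _ i, ?_, fun i => ?_⟩
  · rintro rfl
    simp at hh
  · have h1 : Tendsto (fun n => A.mulVec (g (φ n)) i) atTop (𝓝 (A.mulVec h i)) :=
      tendsto_finsetSum _ fun j _ => (hlimi j).const_mul _
    have h2 : Tendsto (fun n => (1 + 1 / ((φ n : ℝ) + 1)) * g (φ n) i) atTop
        (𝓝 ((1 + 0) * h i)) :=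
      ((tendsto_one_div_add_atTop_nhds_zero_nat.comp hφ.tendsto_atTop).const_add 1).mul (hlimi i)
    rw [add_zero, one_mul] at h2
    exact le_of_tendsto_of_tendsto' h1 h2 fun n => hgA _ i

end PerronFrobenius

section Negligible

variable {d : ℕ}

/-- A bounded set is `s`-negligible if its covering numbers are `o(r ^ (-s))` as `r → 0`. -/
def IsNegligible (s : ℝ) (A : Set (Pt d)) : Prop :=
  Bornology.IsBounded A ∧
    Tendsto (fun r : ℝ => r ^ s * (coveringNumber A r : ℝ)) (𝓝[>] 0) (𝓝 0)

lemma isNegligible_empty (s : ℝ) : IsNegligible s (∅ : Set (Pt d)) := by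
  have h : ∀ r, coveringNumber (∅ : Set (Pt d)) r = 0 := fun r => by
    simpa using coveringNumber_le_card (r := r) (Fin.elim0 : Fin 0 → Pt d) (empty_subset _)
  exact ⟨Bornology.isBounded_empty, by simp [h]⟩

lemma IsNegligible.union {s : ℝ} {A B : Set (Pt d)} (hA : IsNegligible s A)
    (hB : IsNegligible s B) : IsNegligible s (A ∪ B) := by
  refine ⟨hA.1.union hB.1, ?_⟩
  have hsum := hA.2.add hB.2
  rw [add_zero] at hsum
  refine squeeze_zero' ?_ ?_ hsum
  · filter_upwards [self_mem_nhdsWithin] with r (hr : 0 < r) using by positivity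
  · filter_upwards [self_mem_nhdsWithin] with r (hr : 0 < r)
    rw [← mul_add]
    have := coveringNumber_union_le hA.1 hB.1 hr
    gcongr
    exact_mod_cast this

lemma IsNegligible.iUnion {s : ℝ} {ι : Type*} [Fintype ι] {A : ι → Set (Pt d)}
    (hA : ∀ i, IsNegligible s (A i)) : IsNegligible s (⋃ i, A i) := by
  refine ⟨Bornology.isBounded_iUnion.2 fun i => (hA i).1, ?_⟩
  have hsum := tendsto_finsetSum Finset.univ fun i _ => (hA i).2
  rw [Finset.sum_const_zero] at hsum
  refine squeeze_zero' ?_ ?_ hsum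
  · filter_upwards [self_mem_nhdsWithin] with r (hr : 0 < r) using by positivity
  · filter_upwards [self_mem_nhdsWithin] with r (hr : 0 < r)
    rw [← Finset.mul_sum]
    have := coveringNumber_iUnion_le (fun i => (hA i).1) hr
    gcongr
    exact_mod_cast this

lemma tendsto_div_const_nhdsGT_zero {ρ : ℝ} (hρ : 0 < ρ) :
    Tendsto (fun r : ℝ => r / ρ) (𝓝[>] 0) (𝓝[>] 0) := by
  refine tendsto_nhdsWithin_iff.2 ⟨?_, ?_⟩
  · have : Tendsto (fun r : ℝ => r / ρ) (𝓝 0) (𝓝 (0 / ρ)) := tendsto_id.div_const ρ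
    rw [zero_div] at this
    exact this.mono_left nhdsWithin_le_nhds
  · filter_upwards [self_mem_nhdsWithin] with r (hr : 0 < r) using div_pos hr hρ

lemma IsNegligible.image {s : ℝ} {A : Set (Pt d)} (hA : IsNegligible s A) {S : Pt d → Pt d}
    {ρ : ℝ} (hρ : 0 < ρ) (hS : ∀ x y, dist (S x) (S y) = ρ * dist x y) :
    IsNegligible s (S '' A) := by
  refine ⟨isBounded_image_of_similarity hρ hS hA.1, ?_⟩
  have hlim := (hA.2.comp (tendsto_div_const_nhdsGT_zero hρ)).const_mul (ρ ^ s)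
  rw [mul_zero] at hlim
  refine squeeze_zero' ?_ ?_ hlim
  · filter_upwards [self_mem_nhdsWithin] with r (hr : 0 < r) using by positivity
  · filter_upwards [self_mem_nhdsWithin] with r (hr : 0 < r)
    have := coveringNumber_image_le hA.1 hρ hS hr
    rw [Function.comp_apply, ← mul_assoc, ← Real.mul_rpow hρ.le (by positivity),
      mul_div_cancel₀ _ hρ.ne']
    gcongr

lemma isNegligible_of_lintegral_lt_top {s : ℝ} (hs : 0 ≤ s) {A : Set (Pt d)}
    (hA : Bornology.IsBounded A)
    (hint : ∫⁻ t in Ioi (0 : ℝ),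
      ENNReal.ofReal (Real.exp (-s * t) * (coveringNumber A (Real.exp (-t)) : ℝ)) < ⊤) :
    IsNegligible s A := by
  set f : ℝ → ENNReal := fun t =>
    ENNReal.ofReal (Real.exp (-s * t) * (coveringNumber A (Real.exp (-t)) : ℝ))
  set I : ℕ → ENNReal := fun n => ∫⁻ t in Ioc (n : ℝ) ((n + 1 : ℕ) : ℝ), f t
  have hsum : ∑' n, I n ≠ ⊤ := by
    have htsum : ∑' n, I n = ∫⁻ t in ⋃ n : ℕ, Ioc (n : ℝ) ((n + 1 : ℕ) : ℝ), f t :=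
      (lintegral_iUnion (fun _ => measurableSet_Ioc)
        (Nat.mono_cast (α := ℝ)).pairwise_disjoint_on_Ioc_succ f).symm
    rw [htsum]
    refine (lt_of_le_of_lt (lintegral_mono_set ?_) hint).ne
    exact iUnion_subset fun n x hx => lt_of_le_of_lt (Nat.cast_nonneg n) hx.1
  have hlim : Tendsto (fun n => (I n).toReal) atTop (𝓝 0) := by
    have := (ENNReal.tendsto_toReal ENNReal.zero_ne_top).comp
      (ENNReal.tendsto_atTop_zero_of_tsum_ne_top hsum)
    simpa [Function.comp_def] using this
  have hceil : Tendsto (fun r : ℝ => ⌈-Real.log r⌉₊) (𝓝[>] 0) atTop :=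
    tendsto_nat_ceil_atTop.comp (tendsto_neg_atBot_atTop.comp Real.tendsto_log_nhdsGT_zero)
  have hlim' := (hlim.comp hceil).const_mul (Real.exp (2 * s))
  rw [mul_zero] at hlim'
  refine ⟨hA, squeeze_zero' ?_ ?_ hlim'⟩
  · filter_upwards [self_mem_nhdsWithin] with r (hr : 0 < r) using by positivity
  · filter_upwards [Ioo_mem_nhdsGT (zero_lt_one (α := ℝ))] with r hr
    obtain ⟨hr0, hr1⟩ := hr
    set u := -Real.log r with hu
    have hu0 : 0 < u := by rw [hu]; linarith [Real.log_neg hr0 hr1]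
    have hru : r = Real.exp (-u) := by rw [hu, neg_neg, Real.exp_log hr0]
    set n := ⌈u⌉₊
    have hn1 : u ≤ n := Nat.le_ceil u
    have hn2 : (n : ℝ) < u + 1 := Nat.ceil_lt_add_one hu0.le
    have hIn : ENNReal.ofReal (Real.exp (-(2 * s)) * (r ^ s * (coveringNumber A r : ℝ))) ≤ I n := by
      have h1 : ∫⁻ _ in Ioc (n : ℝ) ((n + 1 : ℕ) : ℝ),
          ENNReal.ofReal (Real.exp (-(2 * s)) * (r ^ s * (coveringNumber A r : ℝ))) ≤ I n := by
        refine setLIntegral_mono' measurableSet_Ioc fun t ht => ENNReal.ofReal_le_ofReal ?_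
        have ht1 : (n : ℝ) < t := ht.1
        have ht2 : t ≤ n + 1 := by simpa using ht.2
        rw [← mul_assoc]
        have hexp : Real.exp (-(2 * s)) * r ^ s ≤ Real.exp (-s * t) := by
          rw [Real.rpow_def_of_pos hr0, ← Real.exp_add, Real.exp_le_exp]
          have : Real.log r = -u := by rw [hu, neg_neg]
          rw [this]
          nlinarith
        have hcov : coveringNumber A r ≤ coveringNumber A (Real.exp (-t)) := by
          refine coveringNumber_anti hA (Real.exp_pos _) ?_
          rw [hru, Real.exp_le_exp]
          linarith
        gcongr
      simpa using h1
    have hInt : I n ≠ ⊤ := ENNReal.ne_top_of_tsum_ne_top hsum n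
    have h2 := ENNReal.toReal_mono hInt hIn
    rw [ENNReal.toReal_ofReal (by positivity), Real.exp_neg,
      inv_mul_le_iff₀ (Real.exp_pos _)] at h2
    exact h2

end Negligible

section Renewal

variable {V : Type} [Fintype V]

/-- A subcritical renewal inequality forces decay at the origin. -/
lemma eventually_le_of_renewal {ι : V → Type} [∀ i, Fintype (ι i)] {τ : ∀ i, ι i → V}
    {ρ w : ∀ i, ι i → ℝ} (hρ0 : ∀ i a, 0 < ρ i a) (hρ1 : ∀ i a, ρ i a < 1)
    (hw : ∀ i a, 0 ≤ w i a) {h : V → ℝ} (hh : ∀ i, 0 < h i)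
    (hwh : ∀ i, ∑ a, w i a * h (τ i a) < h i) {φ c : V → ℝ → ℝ}
    (hc : ∀ i, Tendsto (c i) (𝓝[>] 0) (𝓝 0))
    (hbdd : ∀ i, ∀ x > 0, ∀ y, ∃ M, ∀ r ∈ Icc x y, φ i r ≤ M)
    (hrec : ∀ᶠ r in 𝓝[>] (0 : ℝ), ∀ i, φ i r ≤ c i r + ∑ a, w i a * φ (τ i a) (r / ρ i a))
    {η : ℝ} (hη : 0 < η) : ∀ᶠ r in 𝓝[>] (0 : ℝ), ∀ i, φ i r ≤ η * h i := by
  obtain ⟨θ, hθ, hθ01⟩ : ∃ θ : ℝ, (∀ i, ∑ a, w i a * h (τ i a) ≤ θ * h i) ∧ θ ∈ Ioo (0 : ℝ) 1 := by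
    have h1 : ∀ᶠ θ in 𝓝[<] (1 : ℝ), ∀ i, ∑ a, w i a * h (τ i a) ≤ θ * h i := by
      refine eventually_all.2 fun i => ?_
      have hlt : (∑ a, w i a * h (τ i a)) / h i < 1 := (div_lt_one (hh i)).2 (hwh i)
      filter_upwards [Ioo_mem_nhdsLT hlt] with θ hθ using (div_le_iff₀ (hh i)).1 hθ.1.le
    exact (h1.and (Ioo_mem_nhdsLT zero_lt_one)).exists
  obtain ⟨hθ0, hθ1⟩ := hθ01
  obtain ⟨q, hq, hq0, hq1⟩ : ∃ q : ℝ, (∀ i a, ρ i a ≤ q) ∧ q ∈ Ioo (0 : ℝ) 1 := by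
    have h1 : ∀ᶠ q in 𝓝[<] (1 : ℝ), ∀ i a, ρ i a ≤ q := by
      refine eventually_all.2 fun i => eventually_all.2 fun a => ?_
      filter_upwards [Ioo_mem_nhdsLT (hρ1 i a)] with q hq using hq.1.le
    exact (h1.and (Ioo_mem_nhdsLT zero_lt_one)).exists
  obtain ⟨p, hp, hp0, hp1⟩ : ∃ p : ℝ, (∀ i a, p ≤ ρ i a) ∧ p ∈ Ioo (0 : ℝ) 1 := by
    have h1 : ∀ᶠ p in 𝓝[>] (0 : ℝ), ∀ i a, p ≤ ρ i a := by
      refine eventually_all.2 fun i => eventually_all.2 fun a => ?_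
      filter_upwards [Ioo_mem_nhdsGT (hρ0 i a)] with p hp using hp.2.le
    exact (h1.and (Ioo_mem_nhdsGT zero_lt_one)).exists
  -- one application of the renewal inequality
  have step : ∀ {r b κ : ℝ} {i : V}, φ i r ≤ c i r + ∑ a, w i a * φ (τ i a) (r / ρ i a) →
      c i r ≤ (1 - θ) * κ * h i → 0 ≤ b → (∀ a, φ (τ i a) (r / ρ i a) ≤ b * h (τ i a)) →
      φ i r ≤ ((1 - θ) * κ + θ * b) * h i := by
    intro r b κ i h1 h2 hb h3
    have h4 : ∑ a, w i a * φ (τ i a) (r / ρ i a) ≤ b * ∑ a, w i a * h (τ i a) := by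
      rw [Finset.mul_sum]
      refine Finset.sum_le_sum fun a _ => ?_
      rw [mul_left_comm]
      exact mul_le_mul_of_nonneg_left (h3 a) (hw i a)
    have h5 := mul_le_mul_of_nonneg_left (hθ i) hb
    linarith
  have hcs : ∀ κ > 0, ∀ᶠ r in 𝓝[>] (0 : ℝ), ∀ i, c i r ≤ (1 - θ) * κ * h i := by
    intro κ hκ
    refine eventually_all.2 fun i => ?_
    exact (hc i).eventually_le_const (mul_pos (mul_pos (by linarith) hκ) (hh i))
  obtain ⟨r₀, hr₀, hbase⟩ := mem_nhdsGT_iff_exists_Ioo_subset.1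
    (hrec.and (hcs 1 one_pos))
  obtain ⟨B, hB1, hB⟩ : ∃ B : ℝ, 1 ≤ B ∧ ∀ i, ∀ r ∈ Icc r₀ (r₀ / p), φ i r ≤ B * h i := by
    choose M hM using fun i => hbdd i r₀ hr₀ (r₀ / p)
    have h1 : ∀ᶠ B : ℝ in atTop, ∀ i, M i ≤ B * h i := by
      refine eventually_all.2 fun i => ?_
      filter_upwards [eventually_ge_atTop (M i / h i)] with B hB using (div_le_iff₀ (hh i)).1 hB
    obtain ⟨B, hB, hB1⟩ := (h1.and (eventually_ge_atTop 1)).exists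
    exact ⟨B, hB1, fun i r hr => (hM i r hr).trans (hB i)⟩
  have hr₀0 : 0 < r₀ := hr₀
  have hbound : ∀ n : ℕ, ∀ i, ∀ r ∈ Icc (q ^ n * r₀) (r₀ / p), φ i r ≤ B * h i := by
    intro n
    induction n with
    | zero => simpa using hB
    | succ n ih =>
      intro i r hr
      rcases le_or_gt r₀ r with hrr | hrr
      · exact hB i r ⟨hrr, hr.2⟩
      have hr0 : 0 < r := lt_of_lt_of_le (by positivity) hr.1
      obtain ⟨h1, h2⟩ := hbase ⟨hr0, hrr⟩
      have h3 := step (κ := B) (h1 i) ((h2 i).trans (by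
        have := hh i
        have : 0 < 1 - θ := by linarith
        gcongr)) (by linarith) (fun a => ih (τ i a) (r / ρ i a) ⟨?_, ?_⟩)
      · calc φ i r ≤ _ := h3
          _ = B * h i := by ring
      · rw [le_div_iff₀ (hρ0 i a)]
        calc q ^ n * r₀ * ρ i a ≤ q ^ n * r₀ * q := by gcongr; exact hq i a
          _ = q ^ (n + 1) * r₀ := by ring
          _ ≤ r := hr.1
      · have := hp i a
        gcongr
  have hiter : ∀ k : ℕ, ∀ᶠ r in 𝓝[>] (0 : ℝ), ∀ i, φ i r ≤ (η / 2 + θ ^ k * B) * h i := by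
    intro k
    induction k with
    | zero =>
      filter_upwards [Ioo_mem_nhdsGT hr₀0] with r hr i
      obtain ⟨n, hn⟩ := exists_pow_lt_of_lt_one (div_pos hr.1 hr₀0) hq1
      have h1 := hbound n i r ⟨((lt_div_iff₀ hr₀0).1 hn).le, hr.2.le.trans
        ((le_div_iff₀ hp0).2 (mul_le_of_le_one_right hr₀0.le hp1.le))⟩
      have := hh i
      nlinarith [mul_pos hη this]
    | succ k ih =>
      have hshift : ∀ᶠ r in 𝓝[>] (0 : ℝ), ∀ i a, φ (τ i a) (r / ρ i a) ≤
          (η / 2 + θ ^ k * B) * h (τ i a) := by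
        refine eventually_all.2 fun i => eventually_all.2 fun a => ?_
        filter_upwards [(tendsto_div_const_nhdsGT_zero (hρ0 i a)).eventually ih] with r hr
          using hr _
      filter_upwards [hshift, hrec, hcs (η / 2) (half_pos hη)] with r h1 h2 h3 i
      calc φ i r ≤ _ := step (h2 i) (h3 i) (by positivity) (h1 i)
        _ = (η / 2 + θ ^ (k + 1) * B) * h i := by ring
  obtain ⟨k, hk⟩ := exists_pow_lt_of_lt_one (div_pos (half_pos hη) (by linarith : 0 < B)) hθ1
  have hk' := (lt_div_iff₀ (by linarith : 0 < B)).1 hk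
  filter_upwards [hiter k] with r hr i
  refine (hr i).trans ?_
  have := hh i
  gcongr
  linarith

end Renewal

section BoundaryLayer

variable {d : ℕ}

/-- The points of `A` whose closed `R`-ball is not contained in `U`. -/
def boundaryLayer (A U : Set (Pt d)) (R : ℝ) : Set (Pt d) :=
  {x ∈ A | ¬ closedBall x R ⊆ U}

lemma boundaryLayer_subset (A U : Set (Pt d)) (R : ℝ) : boundaryLayer A U R ⊆ A :=
  fun _ hx => hx.1

/-- Away from the boundary layers, a ball of radius `r` cannot meet two of the sets `A i`. -/
lemma sum_coveringNumber_le {V : Type*} [Fintype V] {A U : V → Set (Pt d)}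
    (hA : ∀ i, Bornology.IsBounded (A i)) (hU : Pairwise fun i j => Disjoint (U i) (U j))
    {r : ℝ} (hr : 0 < r) :
    ∑ i, coveringNumber (A i) r ≤ coveringNumber (⋃ i, A i) r +
      ∑ i, coveringNumber (boundaryLayer (A i) (U i) (2 * r)) r := by
  classical
  obtain ⟨c, hc⟩ := exists_cover_of_isBounded (Bornology.isBounded_iUnion.2 hA) hr
  let J : V → Finset (Fin (coveringNumber (⋃ i, A i) r)) := fun i =>
    Finset.univ.filter fun k => ∃ x ∈ closedBall (c k) r, closedBall x (2 * r) ⊆ U i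
  have hJ : ∀ i, coveringNumber (A i) r ≤
      (J i).card + coveringNumber (boundaryLayer (A i) (U i) (2 * r)) r := by
    intro i
    obtain ⟨b, hb⟩ := exists_cover_of_isBounded
      ((hA i).subset (boundaryLayer_subset (A i) (U i) (2 * r))) hr
    have := coveringNumber_le_card (A := A i) (r := r)
      (Sum.elim (fun k : J i => c k) b) (fun x hx => by
        by_cases hxU : closedBall x (2 * r) ⊆ U i
        · obtain ⟨k, hk⟩ := mem_iUnion.1 (hc (mem_iUnion.2 ⟨i, hx⟩))
          exact mem_iUnion.2 ⟨Sum.inl ⟨k, by simpa [J] using ⟨x, hk, hxU⟩⟩, hk⟩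
        · obtain ⟨k, hk⟩ := mem_iUnion.1 (hb ⟨hx, hxU⟩)
          exact mem_iUnion.2 ⟨Sum.inr k, hk⟩)
    simpa using this
  have hdisj : ∀ i ∈ (Finset.univ : Finset V), ∀ j ∈ (Finset.univ : Finset V), i ≠ j →
      Disjoint (J i) (J j) := by
    intro i _ j _ hij
    rw [Finset.disjoint_left]
    intro k hki hkj
    obtain ⟨x, hx, hxU⟩ := (Finset.mem_filter.1 hki).2
    obtain ⟨y, hy, hyU⟩ := (Finset.mem_filter.1 hkj).2
    have hyx : y ∈ closedBall x (2 * r) := by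
      rw [mem_closedBall] at hx hy ⊢
      linarith [dist_triangle_right y x (c k)]
    exact disjoint_left.1 (hU hij) (hxU hyx) (hyU (mem_closedBall_self (by linarith)))
  calc ∑ i, coveringNumber (A i) r
      ≤ ∑ i, ((J i).card + coveringNumber (boundaryLayer (A i) (U i) (2 * r)) r) :=
        Finset.sum_le_sum fun i _ => hJ i
    _ = (Finset.univ.biUnion J).card +
        ∑ i, coveringNumber (boundaryLayer (A i) (U i) (2 * r)) r := by
        rw [Finset.sum_add_distrib, Finset.card_biUnion hdisj]
    _ ≤ _ := by
        gcongr
        simpa using Finset.card_le_univ (Finset.univ.biUnion J)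

end BoundaryLayer

namespace MWGraph

variable {d : ℕ} {V E : Type} [Fintype V] [Fintype E]

/-- A finite decomposition of the sets `K i` and `KC i` into similar copies of ratio at most `b`,
the latter up to an `s`-negligible remainder, under which the weights `h` do not increase. -/
structure Decomposition (K KC U : V → Set (Pt d)) (s : ℝ) (h : V → ℝ) (b : ℝ) (i : V) where
  ι : Type
  fintype : Fintype ι
  term : ι → V
  S : ι → Pt d → Pt d
  ρ : ι → ℝ
  R : Set (Pt d)
  ρ_pos : ∀ a, 0 < ρ a
  ρ_le : ∀ a, ρ a ≤ b
  S_sim : ∀ a x y, dist (S a x) (S a y) = ρ a * dist x y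
  S_maps : ∀ a, MapsTo (S a) (U (term a)) (U i)
  K_subset : K i ⊆ ⋃ a, S a '' K (term a)
  KC_subset : KC i ⊆ (⋃ a, S a '' KC (term a)) ∪ R
  R_negligible : IsNegligible s R
  sum_le : ∑ a, ρ a ^ s * h (term a) ≤ h i

attribute [instance] Decomposition.fintype

variable {K KC U C : V → Set (Pt d)} {s : ℝ} {h : V → ℝ}

/-- The decomposition of a vertex into itself. -/
def Decomposition.trivial (i : V) : Decomposition K KC U s h 1 i where
  ι := Unit
  fintype := inferInstance
  term _ := i
  S _ := id
  ρ _ := 1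
  R := ∅
  ρ_pos _ := one_pos
  ρ_le _ := le_rfl
  S_sim _ x y := by simp
  S_maps _ := mapsTo_id _
  K_subset x hx := mem_iUnion.2 ⟨(), x, hx, rfl⟩
  KC_subset x hx := Or.inl (mem_iUnion.2 ⟨(), x, hx, rfl⟩)
  R_negligible := isNegligible_empty s
  sum_le := by simp

/-- Refine a decomposition by applying the defining relations at every terminal vertex. -/
def Decomposition.refine (G : MWGraph d V E) [DecidableEq V] (hK : G.IsAttractor K)
    (hKC : G.IsInhomAttractor C KC) (hU : G.IsOSCWith U) (hC : ∀ i, IsNegligible s (C i))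
    (hh : ∀ i, ∑ e : {e : E // G.init e = i}, G.r e ^ s * h (G.term e) ≤ h i)
    {q : ℝ} (hq : ∀ e, G.r e ≤ q) {b : ℝ} {i : V} (D : Decomposition K KC U s h b i) :
    Decomposition K KC U s h (b * q) i where
  ι := Σ a : D.ι, {e : E // G.init e = D.term a}
  fintype := inferInstance
  term p := G.term p.2
  S p := D.S p.1 ∘ G.S p.2
  ρ p := D.ρ p.1 * G.r p.2
  R := D.R ∪ ⋃ a, D.S a '' C (D.term a)
  ρ_pos p := mul_pos (D.ρ_pos _) (G.r_pos _)
  ρ_le p := mul_le_mul (D.ρ_le _) (hq _) (G.r_pos _).le ((D.ρ_pos p.1).le.trans (D.ρ_le _))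
  S_sim p x y := by rw [Function.comp_apply, Function.comp_apply, D.S_sim, G.S_sim, mul_assoc]
  S_maps p := by
    refine (D.S_maps p.1).comp fun x hx => ?_
    have := hU.2.2.2.2.1 (D.term p.1)
    exact this (mem_iUnion₂.2 ⟨p.2, p.2.2, x, hx, rfl⟩)
  K_subset := by
    intro x hx
    obtain ⟨a, y, hy, rfl⟩ := mem_iUnion.1 (D.K_subset hx)
    rw [hK.2.2] at hy
    obtain ⟨e, he, z, hz, rfl⟩ := mem_iUnion₂.1 hy
    exact mem_iUnion.2 ⟨⟨a, e, he⟩, z, hz, rfl⟩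
  KC_subset := by
    intro x hx
    rcases D.KC_subset hx with hx | hx
    · obtain ⟨a, y, hy, rfl⟩ := mem_iUnion.1 hx
      rw [hKC.2.2] at hy
      rcases hy with hy | hy
      · obtain ⟨e, he, z, hz, rfl⟩ := mem_iUnion₂.1 hy
        exact Or.inl (mem_iUnion.2 ⟨⟨a, e, he⟩, z, hz, rfl⟩)
      · exact Or.inr (Or.inr (mem_iUnion.2 ⟨a, y, hy, rfl⟩))
    · exact Or.inr (Or.inl hx)
  R_negligible := D.R_negligible.union
    (IsNegligible.iUnion fun a => (hC _).image (D.ρ_pos a) (D.S_sim a))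
  sum_le := by
    rw [Fintype.sum_sigma]
    refine le_trans (Finset.sum_le_sum fun a _ => ?_) D.sum_le
    have := hh (D.term a)
    calc ∑ e : {e : E // G.init e = D.term a}, (D.ρ a * G.r e) ^ s * h (G.term e)
        = D.ρ a ^ s * ∑ e : {e : E // G.init e = D.term a}, G.r e ^ s * h (G.term e) := by
          rw [Finset.mul_sum]
          refine Finset.sum_congr rfl fun e _ => ?_
          rw [Real.mul_rpow (D.ρ_pos a).le (G.r_pos _).le, mul_assoc]
      _ ≤ D.ρ a ^ s * h (D.term a) :=
          mul_le_mul_of_nonneg_left this (Real.rpow_nonneg (D.ρ_pos a).le _)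

lemma exists_decomposition (G : MWGraph d V E) [DecidableEq V] (hK : G.IsAttractor K)
    (hKC : G.IsInhomAttractor C KC) (hU : G.IsOSCWith U) (hC : ∀ i, IsNegligible s (C i))
    (hh : ∀ i, ∑ e : {e : E // G.init e = i}, G.r e ^ s * h (G.term e) ≤ h i)
    {q : ℝ} (hq : ∀ e, G.r e ≤ q) (n : ℕ) (i : V) :
    Nonempty (Decomposition K KC U s h (q ^ n) i) := by
  induction n with
  | zero => rw [pow_zero]; exact ⟨Decomposition.trivial i⟩
  | succ n ih =>
    obtain ⟨D⟩ := ih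
    rw [pow_succ]
    exact ⟨D.refine G hK hKC hU hC hh hq⟩

/-- Some decomposition of `KC i` has a piece lying well inside `U i`. -/
lemma exists_decomposition_interior_piece (G : MWGraph d V E) [DecidableEq V]
    (hK : G.IsAttractor K) (hKC : G.IsInhomAttractor C KC) (hU : G.IsOSCWith U)
    (hC : ∀ i, IsNegligible s (C i))
    (hh : ∀ i, ∑ e : {e : E // G.init e = i}, G.r e ^ s * h (G.term e) ≤ h i)
    (i : V) (hUK : (U i ∩ K i).Nonempty) :
    ∃ b < 1, ∃ D : Decomposition K KC U s h b i, ∃ a : D.ι, ∃ δ > 0,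
      ∀ y ∈ KC (D.term a), closedBall (D.S a y) δ ⊆ U i := by
  obtain ⟨q, hq, hq0, hq1⟩ : ∃ q : ℝ, (∀ e, G.r e ≤ q) ∧ q ∈ Ioo (0 : ℝ) 1 := by
    have h1 : ∀ᶠ q in 𝓝[<] (1 : ℝ), ∀ e, G.r e ≤ q := by
      refine eventually_all.2 fun e => ?_
      filter_upwards [Ioo_mem_nhdsLT (G.r_lt_one e)] with q hq using hq.1.le
    exact (h1.and (Ioo_mem_nhdsLT zero_lt_one)).exists
  obtain ⟨x, hxU, hxK⟩ := hUK
  obtain ⟨ε, hε, hball⟩ := Metric.isOpen_iff.1 (hU.2.1 i) x hxU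
  have hbdd : Bornology.IsBounded (⋃ j, K j ∪ KC j) :=
    Bornology.isBounded_iUnion.2 fun j => (hK.1 j).isBounded.union (hKC.1 j).isBounded
  obtain ⟨M, hM⟩ := Metric.isBounded_iff.1 hbdd
  have hM' : 0 < |M| + 1 := by positivity
  obtain ⟨n, hn⟩ := exists_pow_lt_of_lt_one (div_pos (half_pos hε) hM') hq1
  have hn' : q ^ (n + 1) * (|M| + 1) < ε / 2 :=
    lt_of_le_of_lt (mul_le_mul_of_nonneg_right (pow_le_pow_of_le_one hq0.le hq1.le n.le_succ)
      hM'.le) ((lt_div_iff₀ hM').1 hn)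
  obtain ⟨D⟩ := exists_decomposition G hK hKC hU hC hh hq (n + 1) i
  obtain ⟨a, z, hz, rfl⟩ := mem_iUnion.1 (D.K_subset hxK)
  refine ⟨q ^ (n + 1), pow_lt_one₀ hq0.le hq1 n.succ_ne_zero, D, a, ε / 2, half_pos hε,
    fun y hy w hw => hball ?_⟩
  have hdist : dist y z ≤ |M| + 1 :=
    (hM (mem_iUnion.2 ⟨_, Or.inr hy⟩) (mem_iUnion.2 ⟨_, Or.inl hz⟩)).trans
      ((le_abs_self M).trans (by linarith))
  have h1 : dist (D.S a y) (D.S a z) < ε / 2 := by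
    rw [D.S_sim]
    exact lt_of_le_of_lt (mul_le_mul (D.ρ_le a) hdist dist_nonneg (by positivity)) hn'
  rw [mem_closedBall] at hw
  rw [mem_ball]
  linarith [dist_triangle w (D.S a y) (D.S a z)]

lemma coveringNumber_boundaryLayer_le {b : ℝ} {i : V} (D : Decomposition K KC U s h b i)
    (hKC : ∀ j, Bornology.IsBounded (KC j)) {a₀ : D.ι} {δ : ℝ}
    (hδ : ∀ y ∈ KC (D.term a₀), closedBall (D.S a₀ y) δ ⊆ U i) [DecidableEq D.ι]
    {r : ℝ} (hr : 0 < r) (hrδ : 2 * r ≤ δ) :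
    coveringNumber (boundaryLayer (KC i) (U i) (2 * r)) r ≤ coveringNumber D.R r +
      ∑ a : {a // a ≠ a₀}, coveringNumber (boundaryLayer (KC (D.term a)) (U (D.term a))
        (2 * (r / D.ρ a))) (r / D.ρ a) := by
  set L : D.ι → Set (Pt d) := fun a =>
    boundaryLayer (KC (D.term a)) (U (D.term a)) (2 * (r / D.ρ a))
  have hLb : ∀ a, Bornology.IsBounded (L a) := fun a =>
    (hKC _).subset (boundaryLayer_subset _ _ _)
  have himg : ∀ a, Bornology.IsBounded (D.S a '' L a) := fun a =>
    isBounded_image_of_similarity (D.ρ_pos a) (D.S_sim a) (hLb a)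
  have hub : Bornology.IsBounded (⋃ a : {a // a ≠ a₀}, D.S a '' L a) :=
    Bornology.isBounded_iUnion.2 fun a => himg a
  have hsub : boundaryLayer (KC i) (U i) (2 * r) ⊆ D.R ∪ ⋃ a : {a // a ≠ a₀}, D.S a '' L a := by
    rintro x ⟨hx, hxU⟩
    rcases D.KC_subset hx with hx | hx
    · obtain ⟨a, y, hy, rfl⟩ := mem_iUnion.1 hx
      refine Or.inr (mem_iUnion.2 ⟨⟨a, ?_⟩, y, ⟨hy, fun hyU => hxU ?_⟩, rfl⟩)
      · rintro rfl
        exact hxU ((closedBall_subset_closedBall hrδ).trans (hδ y hy))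
      · rw [← mul_div_assoc] at hyU
        exact closedBall_subset_of_similarity (D.ρ_pos a) (D.S_sim a) (D.S_maps a) hyU
    · exact Or.inl hx
  calc _ ≤ coveringNumber (D.R ∪ ⋃ a : {a // a ≠ a₀}, D.S a '' L a) r :=
        coveringNumber_mono (D.R_negligible.1.union hub) hsub hr
    _ ≤ coveringNumber D.R r + coveringNumber (⋃ a : {a // a ≠ a₀}, D.S a '' L a) r :=
        coveringNumber_union_le D.R_negligible.1 hub hr
    _ ≤ _ := by
        gcongr
        refine (coveringNumber_iUnion_le (fun a : {a // a ≠ a₀} => himg a) hr).trans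
          (Finset.sum_le_sum fun a _ => ?_)
        exact coveringNumber_image_le (hLb a) (D.ρ_pos a) (D.S_sim a) hr

lemma tendsto_coveringNumber_boundaryLayer (G : MWGraph d V E) [DecidableEq V]
    (hK : G.IsAttractor K) (hKC : G.IsInhomAttractor C KC) (hU : G.IsOSCWith U)
    (hUK : ∀ i, (U i ∩ K i).Nonempty) (hs : 0 ≤ s) (hC : ∀ i, IsNegligible s (C i))
    (hpos : ∀ i, 0 < h i)
    (hh : ∀ i, ∑ e : {e : E // G.init e = i}, G.r e ^ s * h (G.term e) ≤ h i) (i : V) :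
    Tendsto (fun r : ℝ => r ^ s * (coveringNumber (boundaryLayer (KC i) (U i) (2 * r)) r : ℝ))
      (𝓝[>] 0) (𝓝 0) := by
  classical
  have hKCb : ∀ j, Bornology.IsBounded (KC j) := fun j => (hKC.1 j).isBounded
  choose b hb D a₀ δ hδ0 hδ using fun j =>
    exists_decomposition_interior_piece G hK hKC hU hC hh j (hUK j)
  have key : ∀ η > 0, ∀ᶠ r in 𝓝[>] (0 : ℝ), ∀ j,
      r ^ s * (coveringNumber (boundaryLayer (KC j) (U j) (2 * r)) r : ℝ) ≤ η * h j := by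
    intro η hη
    refine eventually_le_of_renewal (ι := fun j => {a : (D j).ι // a ≠ a₀ j})
      (τ := fun j a => (D j).term a) (ρ := fun j a => (D j).ρ a)
      (w := fun j a => (D j).ρ a ^ s)
      (φ := fun j r => r ^ s * (coveringNumber (boundaryLayer (KC j) (U j) (2 * r)) r : ℝ))
      (c := fun j r => r ^ s * (coveringNumber (D j).R r : ℝ))
      (fun j a => (D j).ρ_pos a) (fun j a => ((D j).ρ_le a).trans_lt (hb j))
      (fun j a => Real.rpow_nonneg ((D j).ρ_pos a).le _) hpos (fun j => ?_)
      (fun j => (D j).R_negligible.2) (fun j x hx y => ?_) ?_ hη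
    · have h1 := (D j).sum_le
      rw [Fintype.sum_eq_add_sum_subtype_ne _ (a₀ j)] at h1
      have h2 : 0 < (D j).ρ (a₀ j) ^ s * h ((D j).term (a₀ j)) :=
        mul_pos (Real.rpow_pos_of_pos ((D j).ρ_pos _) _) (hpos _)
      linarith
    · refine ⟨y ^ s * (coveringNumber (KC j) x : ℝ), fun r hr => ?_⟩
      have hr0 : 0 < r := hx.trans_le hr.1
      have h1 : coveringNumber (boundaryLayer (KC j) (U j) (2 * r)) r ≤ coveringNumber (KC j) x :=
        (coveringNumber_mono (hKCb j) (boundaryLayer_subset _ _ _) hr0).trans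
          (coveringNumber_anti (hKCb j) hx hr.1)
      have h2 := hr.2
      have h3 : r ^ s ≤ y ^ s := Real.rpow_le_rpow hr0.le h2 hs
      exact mul_le_mul h3 (by exact_mod_cast h1) (by positivity) (h3.trans' (by positivity))
    · refine eventually_all.2 fun j => ?_
      filter_upwards [Ioo_mem_nhdsGT (half_pos (hδ0 j))] with r hr
      have h1 := coveringNumber_boundaryLayer_le (D j) hKCb (hδ j) hr.1 (by linarith [hr.2])
      have h2 : r ^ s * (coveringNumber (boundaryLayer (KC j) (U j) (2 * r)) r : ℝ) ≤
          r ^ s * ((coveringNumber (D j).R r + ∑ a : {a // a ≠ a₀ j},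
            coveringNumber (boundaryLayer (KC ((D j).term a)) (U ((D j).term a))
              (2 * (r / (D j).ρ a))) (r / (D j).ρ a) : ℕ) : ℝ) :=
        mul_le_mul_of_nonneg_left (by exact_mod_cast h1) (Real.rpow_nonneg hr.1.le _)
      refine h2.trans_eq ?_
      push_cast
      rw [mul_add, Finset.mul_sum]
      congr 1
      refine Finset.sum_congr rfl fun a _ => ?_
      have hρ := (D j).ρ_pos a
      rw [← mul_assoc, ← Real.mul_rpow hρ.le (div_nonneg hr.1.le hρ.le),
        mul_div_cancel₀ _ hρ.ne']
  rw [Metric.tendsto_nhds]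
  intro ε hε
  filter_upwards [key (ε / 2 / h i) (div_pos (half_pos hε) (hpos i)), self_mem_nhdsWithin]
    with r hr (hr0 : 0 < r)
  have h1 := hr i
  rw [div_mul_cancel₀ _ (hpos i).ne'] at h1
  rw [Real.dist_0_eq_abs, abs_of_nonneg (by positivity)]
  linarith

lemma pos_of_isPathFrom (G : MWGraph d V E) [DecidableEq V] (hnn : ∀ i, 0 ≤ h i)
    (hh : ∀ i, ∑ e : {e : E // G.init e = i}, G.r e ^ s * h (G.term e) ≤ h i)
    (γ : List E) (i : V) (hγ : G.IsPathFrom i γ) (hpos : 0 < h (G.pathTerm i γ)) : 0 < h i := by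
  induction γ generalizing i with
  | nil => exact hpos
  | cons e es ih =>
    have h1 : 0 < h (G.term e) := ih _ hγ.2 hpos
    have h2 : G.r e ^ s * h (G.term e) ≤
        ∑ e : {e : E // G.init e = i}, G.r e ^ s * h (G.term e) :=
      Finset.single_le_sum (f := fun e : {e : E // G.init e = i} => G.r e ^ s * h (G.term e))
        (fun e _ => mul_nonneg (Real.rpow_nonneg (G.r_pos _).le _) (hnn _))
        (Finset.mem_univ ⟨e, hγ.1⟩)
    exact (mul_pos (Real.rpow_pos_of_pos (G.r_pos e) s) h1).trans_le (h2.trans (hh i))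

lemma exists_pos_superharmonic (G : MWGraph d V E) [DecidableEq V] [Nonempty V]
    (hSC : G.StronglyConnected) (hs : matrixSpectralRadius (G.Amatrix s) ≤ 1) :
    ∃ h : V → ℝ, (∀ i, 0 < h i) ∧
      ∀ i, ∑ e : {e : E // G.init e = i}, G.r e ^ s * h (G.term e) ≤ h i := by
  obtain ⟨h, hnn, hne, hA⟩ := exists_superharmonic (G.Amatrix s) (fun i j =>
    Finset.sum_nonneg fun e _ => by
      split_ifs
      · exact Real.rpow_nonneg (G.r_pos e).le _
      · exact le_rfl) hs
  have hsum : ∀ i, ∑ e : {e : E // G.init e = i}, G.r e ^ s * h (G.term e) =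
      (G.Amatrix s).mulVec h i := by
    intro i
    rw [← Finset.sum_subtype (Finset.univ.filter fun e => G.init e = i) (by simp)
      (fun e => G.r e ^ s * h (G.term e)), Finset.sum_filter]
    simp only [Matrix.mulVec, dotProduct, Amatrix, Matrix.of_apply, Finset.sum_mul]
    rw [Finset.sum_comm]
    refine Finset.sum_congr rfl fun e _ => ?_
    by_cases he : G.init e = i <;> simp [he]
  have hh := fun i => (hsum i).trans_le (hA i)
  obtain ⟨j, hj⟩ := Function.ne_iff.1 hne
  refine ⟨h, fun i => ?_, hh⟩
  obtain ⟨γ, -, hγ, hγj⟩ := hSC i j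
  exact G.pos_of_isPathFrom hnn hh γ i hγ (hγj ▸ (hnn j).lt_of_ne' hj)

end MWGraph

theorem stmt13 {d : ℕ} {V E : Type} [Fintype V] [Fintype E] [DecidableEq V]
    (G : MWGraph d V E) (hSC : G.StronglyConnected)
    (C K KC U : V → Set (Pt d))
    (hC : G.IsCondensation C) (hK : G.IsAttractor K) (hKC : G.IsInhomAttractor C KC)
    (hU : G.IsOSCWith U) (hUK : ∀ i, (U i ∩ K i).Nonempty)
    (hCU : ∀ i, C i ⊆ closure (U i))
    (s0 : ℝ) (hs0 : IsS0 G s0)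
    (hint : ∀ i : V, ∫⁻ t in Set.Ioi (0 : ℝ),
      ENNReal.ofReal (Real.exp (-s0 * t) * (coveringNumber (C i) (Real.exp (-t)) : ℝ)) < ⊤)
    (hX : Pairwise fun i j : V => Disjoint (interior (G.X i)) (interior (G.X j)))
    (t : ℕ → ℝ) (htpos : ∀ n, 0 < t n) (htop : Tendsto t atTop atTop)
    (l : V → ℝ)
    (hl : ∀ i : V, Tendsto (fun n : ℕ => Real.exp (-s0 * t n) *
      (coveringNumber (KC i) (Real.exp (-(t n))) : ℝ)) atTop (𝓝 (l i))) :
    Tendsto (fun n : ℕ => Real.exp (-s0 * t n) *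
      (coveringNumber (⋃ i : V, KC i) (Real.exp (-(t n))) : ℝ)) atTop (𝓝 (∑ i : V, l i)) := by
  have hKCb : ∀ i, Bornology.IsBounded (KC i) := fun i => (hKC.1 i).isBounded
  have hneg : ∀ i, IsNegligible s0 (C i) := fun i =>
    isNegligible_of_lintegral_lt_top hs0.1 (hC i).1.isBounded (hint i)
  have hUdisj : Pairwise fun i j => Disjoint (U i) (U j) := fun i j hij =>
    (hX hij).mono (interior_maximal (hU.2.2.2.1 i) (hU.2.1 i))
      (interior_maximal (hU.2.2.2.1 j) (hU.2.1 j))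
  have hlayer : ∀ i, Tendsto (fun r : ℝ => r ^ s0 *
      (coveringNumber (boundaryLayer (KC i) (U i) (2 * r)) r : ℝ)) (𝓝[>] 0) (𝓝 0) := by
    intro i
    have : Nonempty V := ⟨i⟩
    obtain ⟨h, hpos, hh⟩ := G.exists_pos_superharmonic hSC hs0.2.le
    exact G.tendsto_coveringNumber_boundaryLayer hK hKC hU hUK hs0.1 hneg hpos hh i
  have hexp : Tendsto (fun n => Real.exp (-(t n))) atTop (𝓝[>] 0) :=
    (Real.tendsto_exp_atBot_nhdsGT).comp (tendsto_neg_atTop_atBot.comp htop)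
  have hrpow : ∀ n, Real.exp (-(t n)) ^ s0 = Real.exp (-s0 * t n) := fun n => by
    rw [← Real.exp_mul]; ring_nf
  have hupper := tendsto_finsetSum Finset.univ fun i _ => hl i
  have hlower := hupper.sub
    (tendsto_finsetSum Finset.univ fun i _ => (hlayer i).comp hexp)
  rw [Finset.sum_const_zero, sub_zero] at hlower
  refine tendsto_of_tendsto_of_tendsto_of_le_of_le hlower hupper (fun n => ?_) (fun n => ?_)
  · have h1 := sum_coveringNumber_le hKCb hUdisj (Real.exp_pos (-(t n)))
    have h2 : (∑ i, (coveringNumber (KC i) (Real.exp (-(t n))) : ℝ)) ≤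
        (coveringNumber (⋃ i, KC i) (Real.exp (-(t n))) : ℝ) +
        ∑ i, (coveringNumber (boundaryLayer (KC i) (U i) (2 * Real.exp (-(t n))))
          (Real.exp (-(t n))) : ℝ) := by exact_mod_cast h1
    have h3 := mul_le_mul_of_nonneg_left h2 (Real.exp_pos (-s0 * t n)).le
    simp only [Function.comp_apply, hrpow, ← Finset.mul_sum]
    rw [mul_add] at h3
    linarith
  · have h1 := coveringNumber_iUnion_le hKCb (Real.exp_pos (-(t n)))
    simp only [← Finset.mul_sum]
    refine mul_le_mul_of_nonneg_left ?_ (Real.exp_pos _).le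
    exact_mod_cast h1
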